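/- arXiv:2309.12614 — 9 statements merged into one kernel-verified Lean document; each statement's English description precedes it below -/
import Mathlib

section
/- Let F : ℝ³ → ℝ be smooth (C^∞) and fix b > 0. Assume that for all a ∈ ℝ, (∂F/∂p)(a, b, −a/b) = b·(∂F/∂a)(a, b, −a/b). Let I ⊆ ℝ be an interval and let p : I → ℝ be a differentiable solution of the ODE dp/da = −(∂F/∂a)(a, b, p(a)) / (∂F/∂p)(a, b, p(a)), meaning that for every a ∈ I one has (∂F/∂p)(a, b, p(a)) ≠ 0 and p'(a) = −(∂F/∂a)(a, b, p(a)) / (∂F/∂p)(a, b, p(a)). If there exists a₀ ∈ I with a₀ + b·p(a₀) ≥ 0, then a + b·p(a) ≥ 0 for all a ∈ I. -/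
/-!
The line `a + b q = 0` is itself a solution of the ODE: on it `∂F/∂p = b ∂F/∂a`, so the field has
slope `-1/b` wherever `∂F/∂p ≠ 0`. Uniqueness of solutions then prevents a solution from crossing it.

Quantitatively, set `g a = a + b p(a)`. Along the solution,
`g' = (∂F/∂p - b ∂F/∂a) / (∂F/∂p)`. The numerator is a `C^1` function vanishing on the line, so
over a compact segment it is at most a constant times `|g|` (`exists_abs_numerator_le`), while the
denominator is bounded away from `0`. Hence `|g'| ≤ C |g|`, and by Grönwall's inequality
(`eq_zero_of_abs_deriv_le_mul_abs`) `g` vanishes on a segment as soon as it vanishes at one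
endpoint. If `g` were nonnegative at one point and negative at another, a zero supplied by the
intermediate value theorem would contradict this.
-/

/-- Grönwall's inequality with zero initial value, in either direction of time. -/
lemma eq_zero_of_abs_deriv_le_mul_abs {g g' : ℝ → ℝ} {c d C : ℝ}
    (hg : ∀ x ∈ Set.uIcc c d, HasDerivAt g (g' x) x)
    (hbound : ∀ x ∈ Set.uIcc c d, |g' x| ≤ C * |g x|) (hc : g c = 0) : g d = 0 := by
  -- The segment is parametrised from `c` to `d` by `[0, 1]`, which handles both orders of `c`, `d`.
  have hmem : ∀ t ∈ Set.Icc (0 : ℝ) 1, c + t * (d - c) ∈ Set.uIcc c d := by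
    intro t ht
    rw [← segment_eq_uIcc, segment_eq_image']
    exact ⟨t, ht, by simp⟩
  have hder : ∀ t ∈ Set.Icc (0 : ℝ) 1,
      HasDerivAt (fun t => g (c + t * (d - c))) (g' (c + t * (d - c)) * (d - c)) t := by
    intro t ht
    have h1 : HasDerivAt (fun t : ℝ => c + t * (d - c)) (d - c) t := by
      simpa using ((hasDerivAt_id t).mul_const (d - c)).const_add c
    exact (hg _ (hmem t ht)).comp t h1
  have key := eq_zero_of_abs_deriv_le_mul_abs_self_of_eq_zero_right
    (f := fun t => g (c + t * (d - c))) (f' := fun t => g' (c + t * (d - c)) * (d - c))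
    (K := C * |d - c|) (a := 0) (b := 1)
    (fun t ht => (hder t ht).continuousAt.continuousWithinAt)
    (fun t ht => (hder t (Set.Ico_subset_Icc_self ht)).hasDerivWithinAt)
    (by simp [hc])
    (fun t ht => by
      have := hbound _ (hmem t (Set.Ico_subset_Icc_self ht))
      simp only [Real.norm_eq_abs, abs_mul]
      nlinarith [mul_le_mul_of_nonneg_right this (abs_nonneg (d - c))])
    1 (by simp)
  simpa using key

/-- A `C^1` function `N` vanishing on the line `a + b q = 0` is controlled by `|a + b q|` along a
continuous curve over a compact set. -/
lemma exists_abs_numerator_le {N : ℝ × ℝ → ℝ} (hN : ContDiff ℝ 1 N) {b : ℝ} (hb : 0 < b)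
    (hline : ∀ a, N (a, -a / b) = 0) {J : Set ℝ} (hJ : IsCompact J) {p : ℝ → ℝ}
    (hp : ContinuousOn p J) :
    ∃ C, 0 ≤ C ∧ ∀ a ∈ J, |N (a, p a)| ≤ C * |a + b * p a| := by
  -- Lipschitz continuity is needed on the curve together with its vertical projection to the line.
  have hS : IsCompact ((fun a => (a, p a)) '' J ∪ (fun a => (a, -a / b)) '' J) :=
    (hJ.image_of_continuousOn (continuousOn_id.prodMk hp)).union
      (hJ.image (by fun_prop))
  obtain ⟨L, hL⟩ := (hN.locallyLipschitz.locallyLipschitzOn).exists_lipschitzOnWith_of_compact hS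
  refine ⟨L / b, by positivity, fun a ha => ?_⟩
  have h := hL.dist_le_mul (a, p a) (Or.inl ⟨a, ha, rfl⟩) (a, -a / b) (Or.inr ⟨a, ha, rfl⟩)
  rw [hline, Prod.dist_eq] at h
  simp only [dist_self, Real.dist_eq, sub_zero] at h
  rw [max_eq_right (abs_nonneg _)] at h
  have e : p a - -a / b = (a + b * p a) / b := by field_simp; ring
  rw [e, abs_div, abs_of_pos hb] at h
  calc _ ≤ _ := h
    _ = _ := by ring


/-- Proposition 1: invariance of `H_b` for the implicit ODE.
Let `F : ℝ³ → ℝ` be smooth, fix `b > 0`, and assume the invariance condition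
`∂F/∂p (a, b, -a/b) = b · ∂F/∂a (a, b, -a/b)` for all `a`.  If `p : I → ℝ` is a differentiable
solution of `dp/da = -(∂F/∂a)/(∂F/∂p)` on an interval `I` (with `∂F/∂p ≠ 0` along the solution)
and `a₀ + b·p(a₀) ≥ 0` at some `a₀ ∈ I`, then `a + b·p(a) ≥ 0` for all `a ∈ I`. -/
theorem Hb_invariant
    (F : ℝ → ℝ → ℝ → ℝ)
    (hF : ContDiff ℝ (⊤ : ℕ∞) (fun x : ℝ × ℝ × ℝ => F x.1 x.2.1 x.2.2))
    (b : ℝ) (hb : 0 < b)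
    (hinv : ∀ a : ℝ,
      deriv (fun p => F a b p) (-a / b) = b * deriv (fun a' => F a' b (-a / b)) a)
    (I : Set ℝ) (hI : I.OrdConnected)
    (p : ℝ → ℝ)
    (hODE : ∀ a ∈ I,
      deriv (fun q => F a b q) (p a) ≠ 0 ∧
      HasDerivAt p
        (- deriv (fun a' => F a' b (p a)) a / deriv (fun q => F a b q) (p a)) a)
    (a₀ : ℝ) (ha₀ : a₀ ∈ I) (hinit : a₀ + b * p a₀ ≥ 0) :
    ∀ a ∈ I, a + b * p a ≥ 0 := by
  set Φ : ℝ × ℝ × ℝ → ℝ := fun x => F x.1 x.2.1 x.2.2 with hΦ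
  have hdiff : ∀ x, HasFDerivAt Φ (fderiv ℝ Φ x) x := fun x =>
    (hF.differentiable (by simp) x).hasFDerivAt
  have hpart_p : ∀ a q, deriv (fun q => F a b q) q = fderiv ℝ Φ (a, b, q) (0, 0, 1) := by
    intro a q
    have h : HasDerivAt (fun q : ℝ => (a, b, q)) ((0, 0, 1) : ℝ × ℝ × ℝ) q :=
      (hasDerivAt_const q a).prodMk ((hasDerivAt_const q b).prodMk (hasDerivAt_id q))
    exact ((hdiff (a, b, q)).comp_hasDerivAt q h).deriv
  have hpart_a : ∀ a q, deriv (fun a' => F a' b q) a = fderiv ℝ Φ (a, b, q) (1, 0, 0) := by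
    intro a q
    have h : HasDerivAt (fun a : ℝ => (a, b, q)) ((1, 0, 0) : ℝ × ℝ × ℝ) a :=
      (hasDerivAt_id a).prodMk ((hasDerivAt_const a b).prodMk (hasDerivAt_const a q))
    exact ((hdiff (a, b, q)).comp_hasDerivAt a h).deriv
  simp only [hpart_p, hpart_a] at hinv hODE
  have hD : ContDiff ℝ 1 (fderiv ℝ Φ) :=
    hF.fderiv_right (WithTop.coe_le_coe.2 (le_top : (1 + 1 : ℕ∞) ≤ ⊤))
  have hP : ContDiff ℝ 1 (fun x : ℝ × ℝ => fderiv ℝ Φ (x.1, b, x.2) (0, 0, 1)) :=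
    (hD.comp (by fun_prop : ContDiff ℝ 1 (fun x : ℝ × ℝ => (x.1, b, x.2)))).clm_apply
      contDiff_const
  have hA : ContDiff ℝ 1 (fun x : ℝ × ℝ => fderiv ℝ Φ (x.1, b, x.2) (1, 0, 0)) :=
    (hD.comp (by fun_prop : ContDiff ℝ 1 (fun x : ℝ × ℝ => (x.1, b, x.2)))).clm_apply
      contDiff_const
  have hN := hP.sub (contDiff_const (c := b) |>.mul hA)
  intro a₁ ha₁
  by_contra! hneg
  have hg : ∀ a ∈ I, HasDerivAt (fun a => a + b * p a)
      ((fderiv ℝ Φ (a, b, p a) (0, 0, 1) - b * fderiv ℝ Φ (a, b, p a) (1, 0, 0)) /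
        fderiv ℝ Φ (a, b, p a) (0, 0, 1)) a := by
    intro a ha
    obtain ⟨h0, h1⟩ := hODE a ha
    have e : (fderiv ℝ Φ (a, b, p a) (0, 0, 1) - b * fderiv ℝ Φ (a, b, p a) (1, 0, 0)) /
        fderiv ℝ Φ (a, b, p a) (0, 0, 1) =
        1 + b * (-fderiv ℝ Φ (a, b, p a) (1, 0, 0) / fderiv ℝ Φ (a, b, p a) (0, 0, 1)) := by
      rw [sub_div, div_self h0]
      ring
    rw [e]
    exact (hasDerivAt_id a).add (h1.const_mul b)
  obtain ⟨c, hc, hc0⟩ : ∃ c ∈ Set.uIcc a₀ a₁, c + b * p c = 0 :=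
    intermediate_value_uIcc
      (fun a ha => (hg a (hI.uIcc_subset ha₀ ha₁ ha)).continuousAt.continuousWithinAt)
      (Set.mem_uIcc.2 (Or.inr ⟨hneg.le, hinit⟩))
  have hJ : Set.uIcc c a₁ ⊆ I := hI.uIcc_subset (hI.uIcc_subset ha₀ ha₁ hc) ha₁
  have hpJ : ContinuousOn p (Set.uIcc c a₁) := fun a ha =>
    (hODE a (hJ ha)).2.continuousAt.continuousWithinAt
  obtain ⟨C, hC, hCb⟩ := exists_abs_numerator_le hN hb
    (fun a => by simp [hinv a]) isCompact_uIcc hpJ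
  have hinvcont : ContinuousOn (fun a => (fderiv ℝ Φ (a, b, p a) (0, 0, 1))⁻¹)
      (Set.uIcc c a₁) :=
    (hP.continuous.comp_continuousOn (continuousOn_id.prodMk hpJ)).inv₀
      (fun a ha => (hODE a (hJ ha)).1)
  obtain ⟨M, hM⟩ := isCompact_uIcc.exists_bound_of_continuousOn hinvcont
  have hzero := eq_zero_of_abs_deriv_le_mul_abs (C := C * M) (fun a ha => hg a (hJ ha))
    (fun a ha => by
      have h1 := hCb a ha
      have h2 := hM a ha
      rw [Real.norm_eq_abs] at h2
      rw [div_eq_mul_inv, abs_mul]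
      calc _ ≤ C * |a + b * p a| * M := by gcongr
        _ = _ := by ring) hc0
  exact hneg.ne hzero
end

section
/- Let F : ℝ³ → ℝ be smooth (C^∞), let ε ≥ 1, and fix b > 0. Assume that for all a ∈ ℝ: (i) ε·(∂F/∂p)(a, b, −εa/b) = b·(∂F/∂a)(a, b, −εa/b), and (ii) (∂F/∂a)(a, b, 0) = 0. Let I ⊆ ℝ be an interval and let p : I → ℝ be a differentiable solution of the ODE dp/da = −(∂F/∂a)(a, b, p(a)) / (∂F/∂p)(a, b, p(a)), meaning that for every a ∈ I one has (∂F/∂p)(a, b, p(a)) ≠ 0 and p'(a) = −(∂F/∂a)(a, b, p(a)) / (∂F/∂p)(a, b, p(a)). If there exists a₀ ∈ I with p(a₀) ≥ 0 and a₀ + (1/ε)·b·p(a₀) ≥ 0, then for all a ∈ I both p(a) ≥ 0 and a + (1/ε)·b·p(a) ≥ 0. -/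
/-!
`F(·, b, ·)` is a first integral of the ODE: it is constant along the solution `a ↦ p a`. The two
hypotheses on the partial derivatives say that it is also constant along each of the two lines
`p = 0` and `p = -(ε / b) a` which bound the region. If the solution meets one of these lines, the
two constants agree, and since `∂F/∂p ≠ 0` there, `F(a, b, ·)` is locally injective, so the
solution stays on the line nearby. Hence the set of times spent on the line is clopen in `I`, so it
is empty or all of `I`. By the intermediate value theorem the solution cannot cross the line.
This is `le_of_level_line`, applied once with slope `0` and once with slope `-(ε / b)`.
-/

lemma deriv_fst_eq {G : ℝ × ℝ → ℝ} (hG : ContDiff ℝ 1 G) (a q : ℝ) :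
    deriv (fun a' => G (a', q)) a = fderiv ℝ G (a, q) (1, 0) := by
  have h1 : HasFDerivAt G (fderiv ℝ G (a, q)) (a, q) :=
    (hG.differentiable (by norm_num) _).hasFDerivAt
  have h2 : HasDerivAt (fun a' : ℝ => (a', q)) (1, 0) a :=
    (hasDerivAt_id a).prodMk (hasDerivAt_const a q)
  exact (h1.comp_hasDerivAt a h2).deriv

lemma deriv_snd_eq {G : ℝ × ℝ → ℝ} (hG : ContDiff ℝ 1 G) (a q : ℝ) :
    deriv (fun q' => G (a, q')) q = fderiv ℝ G (a, q) (0, 1) := by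
  have h1 : HasFDerivAt G (fderiv ℝ G (a, q)) (a, q) :=
    (hG.differentiable (by norm_num) _).hasFDerivAt
  have h2 : HasDerivAt (fun q' : ℝ => (a, q')) (0, 1) q :=
    (hasDerivAt_const q a).prodMk (hasDerivAt_id q)
  exact (h1.comp_hasDerivAt q h2).deriv

lemma fderiv_apply_one {G : ℝ × ℝ → ℝ} (hG : ContDiff ℝ 1 G) (a q v : ℝ) :
    fderiv ℝ G (a, q) (1, v) =
      deriv (fun a' => G (a', q)) a + v * deriv (fun q' => G (a, q')) q := by
  rw [deriv_fst_eq hG, deriv_snd_eq hG, ← smul_eq_mul, ← map_smul, ← map_add]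
  simp

/-- Near a point where its derivative in the second variable is nonzero, a `C¹` function of two
variables is injective in the second variable, uniformly in the first. -/
lemma eventually_eq_of_deriv_snd_ne {G : ℝ × ℝ → ℝ} (hG : ContDiff ℝ 1 G) {a q : ℝ}
    (h : deriv (fun q' => G (a, q')) q ≠ 0) :
    ∀ᶠ z : (ℝ × ℝ) × (ℝ × ℝ) in nhds ((a, q), (a, q)),
      z.1.1 = z.2.1 → G z.1 = G z.2 → z.1.2 = z.2.2 := by
  rw [deriv_snd_eq hG] at h
  have hs : HasStrictFDerivAt G (fderiv ℝ G (a, q)) (a, q) :=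
    hG.contDiffAt.hasStrictFDerivAt (by norm_num)
  have hc : 0 < |fderiv ℝ G (a, q) (0, 1)| / 2 := by positivity
  filter_upwards [hs.isLittleO.def hc] with z hz h1 h2
  have e : z.1 - z.2 = (z.1.2 - z.2.2) • ((0 : ℝ), (1 : ℝ)) := by
    ext <;> simp [h1]
  rw [h2, e, map_smul, sub_self, zero_sub, norm_neg, norm_smul, norm_smul] at hz
  have hn : ‖((0 : ℝ), (1 : ℝ))‖ = 1 := by simp [Prod.norm_def]
  rw [hn, Real.norm_eq_abs, Real.norm_eq_abs] at hz
  by_contra hne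
  have : 0 < |z.1.2 - z.2.2| := abs_pos.2 (sub_ne_zero.2 hne)
  nlinarith [mul_pos this hc]

/-- A solution of `dp/da = -(∂G/∂a)/(∂G/∂p)` starting above the line `p = m a` stays above it,
provided `G` is constant along that line (expressed infinitesimally in `hline`). -/
lemma le_of_level_line {G : ℝ × ℝ → ℝ} (hG : ContDiff ℝ 1 G) (m : ℝ)
    (hline : ∀ a, deriv (fun a' => G (a', m * a)) a
      + m * deriv (fun q => G (a, q)) (m * a) = 0)
    {I : Set ℝ} (hI : I.OrdConnected) {p : ℝ → ℝ}
    (hODE : ∀ a ∈ I, deriv (fun q => G (a, q)) (p a) ≠ 0 ∧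
      HasDerivAt p
        (- deriv (fun a' => G (a', p a)) a / deriv (fun q => G (a, q)) (p a)) a)
    {a₀ : ℝ} (ha₀ : a₀ ∈ I) (h₀ : m * a₀ ≤ p a₀) : ∀ a ∈ I, m * a ≤ p a := by
  have hd : ∀ z, HasFDerivAt G (fderiv ℝ G z) z := fun z =>
    (hG.differentiable (by norm_num) z).hasFDerivAt
  have hlineconst : ∀ x y, G (x, m * x) = G (y, m * y) := by
    have h : ∀ a, HasDerivAt (fun a => G (a, m * a)) 0 a := fun a => by
      have h2 : HasDerivAt (fun a : ℝ => (a, m * a)) (1, m) a :=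
        (hasDerivAt_id a).prodMk (by simpa using (hasDerivAt_id a).const_mul m)
      have h3 := (hd (a, m * a)).comp_hasDerivAt a h2
      rwa [fderiv_apply_one hG, hline a] at h3
    exact is_const_of_deriv_eq_zero (fun a => (h a).differentiableAt) (fun a => (h a).deriv)
  have hsolconst : ∀ x ∈ I, ∀ y ∈ I, G (x, p x) = G (y, p y) := by
    have h : ∀ a ∈ I, HasDerivWithinAt (fun a => G (a, p a)) 0 I a := fun a ha => by
      obtain ⟨hne, hp⟩ := hODE a ha
      have h3 := (hd (a, p a)).comp_hasDerivAt a ((hasDerivAt_id a).prodMk hp)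
      rw [fderiv_apply_one hG, div_mul_cancel₀ _ hne, add_neg_cancel] at h3
      exact h3.hasDerivWithinAt
    intro x hx y hy
    have := hI.convex.norm_image_sub_le_of_norm_hasDerivWithin_le (C := 0) h (by simp) hy hx
    rw [zero_mul, norm_le_zero_iff] at this
    linarith
  have hpc : ContinuousOn p I := fun a ha => (hODE a ha).2.continuousAt.continuousWithinAt
  have hlc : ContinuousOn (fun a => m * a) I := by fun_prop
  have hpre : IsPreconnected I := hI.isPreconnected
  intro a ha
  by_contra! hlt
  obtain ⟨t, ht, hpt⟩ := hpre.intermediate_value₂ ha ha₀ hpc hlc hlt.le h₀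
  have : PreconnectedSpace I := isPreconnected_iff_preconnectedSpace.1 hpre
  have hclopen : IsClopen {x : I | p x = m * x} := by
    refine ⟨isClosed_eq hpc.domRestrict hlc.domRestrict, isOpen_iff_mem_nhds.2 fun x hx => ?_⟩
    have hx' : p x = m * x := hx
    have hpx : ContinuousAt (fun y : I => p y) x := hpc.domRestrict.continuousAt
    have hT : Filter.Tendsto (fun y : I => (((y : ℝ), p y), ((y : ℝ), m * (y : ℝ)))) (nhds x)
        (nhds (((x : ℝ), p x), ((x : ℝ), p x))) := by
      have : ContinuousAt (fun y : I => (((y : ℝ), p y), ((y : ℝ), m * (y : ℝ)))) x := by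
        have hv : ContinuousAt (fun y : I => (y : ℝ)) x := continuous_subtype_val.continuousAt
        exact (hv.prodMk hpx).prodMk (hv.prodMk (hv.const_mul m))
      simpa only [ContinuousAt, ← hx'] using this
    filter_upwards [hT.eventually (eventually_eq_of_deriv_snd_ne hG (hODE x x.2).1)] with y hy
    refine hy rfl ?_
    -- Both sides are constant along their curves, which meet at `x`.
    rw [hsolconst y y.2 x x.2, hx', hlineconst]
  have hall := hclopen.eq_univ ⟨⟨t, ht⟩, hpt⟩
  have : p a = m * a := (hall ▸ Set.mem_univ (⟨a, ha⟩ : I) : (⟨a, ha⟩ : I) ∈ {x : I | p x = m * x})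
  exact hlt.ne this


/-- Proposition 2: invariance of `H_b^ε ∩ ℝ≥0` for the implicit ODE.
Let `F : ℝ³ → ℝ` be smooth, `ε ≥ 1`, and fix `b > 0`.  Assume
`ε · ∂F/∂p (a, b, -εa/b) = b · ∂F/∂a (a, b, -εa/b)` and `∂F/∂a (a, b, 0) = 0` for all `a`.
If `p : I → ℝ` is a differentiable solution of `dp/da = -(∂F/∂a)/(∂F/∂p)` on an interval `I`
(with `∂F/∂p ≠ 0` along the solution) and at some `a₀ ∈ I` both `p(a₀) ≥ 0` and
`a₀ + (1/ε)·b·p(a₀) ≥ 0`, then `p(a) ≥ 0` and `a + (1/ε)·b·p(a) ≥ 0` for all `a ∈ I`. -/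
theorem Hb_eps_invariant
    (F : ℝ → ℝ → ℝ → ℝ)
    (hF : ContDiff ℝ (⊤ : ℕ∞) (fun x : ℝ × ℝ × ℝ => F x.1 x.2.1 x.2.2))
    (ε : ℝ) (hε : 1 ≤ ε)
    (b : ℝ) (hb : 0 < b)
    (hinv : ∀ a : ℝ,
      ε * deriv (fun p => F a b p) (-(ε * a) / b) =
        b * deriv (fun a' => F a' b (-(ε * a) / b)) a)
    (hFa0 : ∀ a : ℝ, deriv (fun a' => F a' b 0) a = 0)
    (I : Set ℝ) (hI : I.OrdConnected)
    (p : ℝ → ℝ)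
    (hODE : ∀ a ∈ I,
      deriv (fun q => F a b q) (p a) ≠ 0 ∧
      HasDerivAt p
        (- deriv (fun a' => F a' b (p a)) a / deriv (fun q => F a b q) (p a)) a)
    (a₀ : ℝ) (ha₀ : a₀ ∈ I) (hinit₁ : p a₀ ≥ 0) (hinit₂ : a₀ + (1 / ε) * b * p a₀ ≥ 0) :
    ∀ a ∈ I, p a ≥ 0 ∧ a + (1 / ε) * b * p a ≥ 0 := by
  have hG : ContDiff ℝ 1 (fun z : ℝ × ℝ => F z.1 b z.2) :=
    (hF.of_le (by exact_mod_cast le_top)).comp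
      (contDiff_fst.prodMk (contDiff_const.prodMk contDiff_snd))
  have hε0 : 0 < ε := by linarith
  have hiff : ∀ a, a + (1 / ε) * b * p a ≥ 0 ↔ -(ε / b) * a ≤ p a := fun a => by
    have e : a + (1 / ε) * b * p a = (b / ε) * (p a - -(ε / b) * a) := by
      field_simp
      ring
    rw [e, ge_iff_le, mul_nonneg_iff_of_pos_left (by positivity), sub_nonneg]
  intro a ha
  constructor
  · have := le_of_level_line hG 0 (fun a => by simpa using hFa0 a) hI hODE ha₀
      (by simpa using hinit₁) a ha
    simpa using this
  · rw [hiff]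
    refine le_of_level_line hG (-(ε / b)) (fun a => ?_) hI hODE ha₀ ((hiff a₀).1 hinit₂) a ha
    have h := hinv a
    rw [show -(ε * a) / b = -(ε / b) * a by ring] at h
    dsimp only
    field_simp at h ⊢
    linarith
end

section
/- Let F : ℝ³ → ℝ be smooth (C^∞) such that for all b > 0 and all a ∈ ℝ, (∂F/∂p)(a, b, −a/b) = b·(∂F/∂a)(a, b, −a/b). Suppose λ : S → ℝ is continuous and satisfies F(a, b, λ(a,b)) = 0 and (∂F/∂p)(a, b, λ(a,b)) ≠ 0 for all (a,b) ∈ S, and moreover λ(0, b) > 0 for all b > 0. Then λ is smooth (C^∞) on S and satisfies a + b·λ(a,b) ≥ 0 for all (a,b) ∈ S. -/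
/-!
The proof has two ingredients.

* The equation `F (a, b, p) = 0` satisfies the hypotheses of the implicit function theorem at every
  point of the graph of `lam`. Hence near such a point its zero set is the graph of a smooth
  function `ψ` (`exists_smooth_local_solution`). As `lam` is continuous on `S`, it agrees with `ψ`
  locally on `S`, so it is smooth there, including at the boundary points `b = 0` of `S`.

* Fix `b > 0`. The invariance condition says exactly that `a ↦ F (a, b, -a / b)` has derivative
  zero, so it is constant (`constant_along_line`). If `a + b * lam (a, b)` vanished for some `a`,
  the constant would be `0`, so `a ↦ lam (a, b)` and `a ↦ -a / b` would both be continuous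
  solutions of `F (a, b, p) = 0`. By local uniqueness the set where they coincide is open; it is also
  closed and nonempty, hence all of `ℝ`, contradicting `lam (0, b) > 0`. So `a + b * lam (a, b)`
  has no zero in `a`, and it is positive at `a = 0`, hence everywhere. For `b = 0` the inequality
  is just `a > 0`.
-/

open Filter Topology

/-- Near a zero at which the derivative in the last variable does not vanish, the zero set of a
smooth function is the graph of a function that is smooth at the base point. -/
lemma exists_smooth_local_solution {G : (ℝ × ℝ) × ℝ → ℝ} (hG : ContDiff ℝ (⊤ : ℕ∞) G)
    (u : (ℝ × ℝ) × ℝ) (h0 : G u = 0) (hd : deriv (fun p => G (u.1, p)) u.2 ≠ 0) :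
    ∃ ψ : ℝ × ℝ → ℝ, ContDiffAt ℝ (⊤ : ℕ∞) ψ u.1 ∧ ∀ᶠ v in 𝓝 u, G v = 0 ↔ ψ v.1 = v.2 := by
  have hu : ContDiffAt ℝ (⊤ : ℕ∞) G u := hG.contDiffAt
  have hn : ((⊤ : ℕ∞) : WithTop ℕ∞) ≠ 0 := by simp
  have hfd : HasFDerivAt G (fderiv ℝ G u) (u.1, u.2) :=
    (hG.differentiable hn u).hasFDerivAt
  have hline : HasDerivAt (fun p : ℝ => G (u.1, p)) (fderiv ℝ G u (0, 1)) u.2 :=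
    hfd.comp_hasDerivAt u.2 ((hasDerivAt_const u.2 u.1).prodMk (hasDerivAt_id u.2))
  rw [hline.deriv] at hd
  have hinvert : (fderiv ℝ G u ∘L .inr ℝ (ℝ × ℝ) ℝ).IsInvertible := by
    refine ⟨ContinuousLinearEquiv.unitsEquivAut ℝ (Units.mk0 _ hd), ?_⟩
    ext
    simp
  refine ⟨hu.implicitFunction hn hinvert, hu.contDiffAt_implicitFunction hn hinvert, ?_⟩
  simpa only [h0] using hu.eventually_apply_eq_iff_implicitFunction hn hinvert

/-- The invariance condition makes `F` constant along each line `{(a, b, -a / b) : a ∈ ℝ}`. -/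
lemma constant_along_line {G : (ℝ × ℝ) × ℝ → ℝ} (hG : Differentiable ℝ G) {b : ℝ} (hb : 0 < b)
    (hinv : ∀ a : ℝ, deriv (fun p => G ((a, b), p)) (-a / b)
      = b * deriv (fun a' => G ((a', b), -a / b)) a) (a a' : ℝ) :
    G ((a, b), -a / b) = G ((a', b), -a' / b) := by
  have key : ∀ x : ℝ, HasDerivAt (fun a => G ((a, b), -a / b)) 0 x := by
    intro x
    have hfd := (hG ((x, b), -x / b)).hasFDerivAt
    set L := fderiv ℝ G ((x, b), -x / b)
    have hp : HasDerivAt (fun p : ℝ => G ((x, b), p)) (L ((0, 0), 1)) (-x / b) :=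
      hfd.comp_hasDerivAt (-x / b)
        ((hasDerivAt_const (-x / b) (x, b)).prodMk (hasDerivAt_id (-x / b)))
    have ha : HasDerivAt (fun a' : ℝ => G ((a', b), -x / b)) (L ((1, 0), 0)) x :=
      hfd.comp_hasDerivAt x
        (((hasDerivAt_id x).prodMk (hasDerivAt_const x b)).prodMk (hasDerivAt_const x (-x / b)))
    have hl : HasDerivAt (fun a => G ((a, b), -a / b)) (L ((1, 0), -1 / b)) x :=
      hfd.comp_hasDerivAt x
        (((hasDerivAt_id x).prodMk (hasDerivAt_const x b)).prodMk
          ((hasDerivAt_id x).neg.div_const b))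
    have hrel := hinv x
    rw [hp.deriv, ha.deriv] at hrel
    have hsplit : (((1, 0), -1 / b) : (ℝ × ℝ) × ℝ)
        = ((1, 0), 0) + (-1 / b) • ((0, 0), 1) := by simp
    rw [hsplit, map_add, map_smul, hrel, smul_eq_mul] at hl
    convert hl using 1
    field_simp
    ring
  exact is_const_of_deriv_eq_zero (fun x => (key x).differentiableAt) (fun x => (key x).deriv) a a'


/-- Lemma 1: smooth safety filters from implicit functions.
Let `S := {(a,b) : b ≥ 0 ∧ (a > 0 ∨ b > 0)}`.  If `F : ℝ³ → ℝ` is smooth and satisfies the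
invariance condition `∂F/∂p (a, b, -a/b) = b · ∂F/∂a (a, b, -a/b)` for all `b > 0`, and
`lam` is continuous on `S` with `F(a, b, lam(a,b)) = 0`, `∂F/∂p (a, b, lam(a,b)) ≠ 0` on `S`
and `lam(0,b) > 0` for all `b > 0`, then `lam` is smooth on `S` and satisfies
`a + b·lam(a,b) ≥ 0` on `S`. -/
theorem lemma_invariance
    (S : Set (ℝ × ℝ))
    (hSdef : S = {x : ℝ × ℝ | 0 ≤ x.2 ∧ (0 < x.1 ∨ 0 < x.2)})
    (F : ℝ → ℝ → ℝ → ℝ)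
    (hF : ContDiff ℝ (⊤ : ℕ∞) (fun x : ℝ × ℝ × ℝ => F x.1 x.2.1 x.2.2))
    (hinv : ∀ b > (0 : ℝ), ∀ a : ℝ,
      deriv (fun p => F a b p) (-a / b) = b * deriv (fun a' => F a' b (-a / b)) a)
    (lam : ℝ × ℝ → ℝ) (hlam : ContinuousOn lam S)
    (hroot : ∀ x ∈ S, F x.1 x.2 (lam x) = 0)
    (hFp : ∀ x ∈ S, deriv (fun p => F x.1 x.2 p) (lam x) ≠ 0)
    (hpos : ∀ b > (0 : ℝ), lam (0, b) > 0) :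
    ContDiffOn ℝ (⊤ : ℕ∞) lam S ∧ ∀ x ∈ S, x.1 + x.2 * lam x ≥ 0 := by
  set G : (ℝ × ℝ) × ℝ → ℝ := fun v => F v.1.1 v.1.2 v.2 with hGdef
  have hG : ContDiff ℝ (⊤ : ℕ∞) G :=
    hF.comp (contDiff_fst.fst.prodMk (contDiff_fst.snd.prodMk contDiff_snd))
  have hloc : ∀ x ∈ S, ∃ ψ : ℝ × ℝ → ℝ, ContDiffAt ℝ (⊤ : ℕ∞) ψ x ∧
      ∀ᶠ v in 𝓝 (x, lam x), G v = 0 ↔ ψ v.1 = v.2 := fun x hx =>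
    exists_smooth_local_solution hG (x, lam x) (hroot x hx) (hFp x hx)
  constructor
  · intro x hx
    obtain ⟨ψ, hψ, huniq⟩ := hloc x hx
    have hgraph : Tendsto (fun y => (y, lam y)) (𝓝[S] x) (𝓝 (x, lam x)) :=
      (tendsto_id.mono_left nhdsWithin_le_nhds).prodMk_nhds (hlam x hx)
    have heq : lam =ᶠ[𝓝[S] x] ψ := by
      filter_upwards [hgraph.eventually huniq, self_mem_nhdsWithin] with y hy hyS
      exact (hy.1 (hroot y hyS)).symm
    exact hψ.contDiffWithinAt.congr_of_eventuallyEq_of_mem heq hx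
  · rintro ⟨a, b⟩ hx
    obtain ⟨hb0, hab⟩ : 0 ≤ b ∧ (0 < a ∨ 0 < b) := by simpa [hSdef] using hx
    rcases hb0.eq_or_lt with rfl | hb
    · have : 0 < a := hab.resolve_right (lt_irrefl 0)
      simpa using this.le
    · have hmem : ∀ t : ℝ, (t, b) ∈ S := fun t => by
        rw [hSdef]
        exact ⟨hb.le, Or.inr hb⟩
      have hcont : Continuous (fun t : ℝ => lam (t, b)) :=
        hlam.comp_continuous (by fun_prop) hmem
      have hline : Continuous (fun t : ℝ => -t / b) := by fun_prop
      have hne : ∀ t : ℝ, t + b * lam (t, b) ≠ 0 := by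
        intro t₀ ht₀
        have ht₀' : lam (t₀, b) = -t₀ / b := by
          rw [eq_div_iff hb.ne']
          linarith
        have hzero : ∀ t : ℝ, G ((t, b), -t / b) = 0 := by
          intro t
          rw [constant_along_line (hG.differentiable (by simp)) hb (hinv b hb) t t₀, ← ht₀']
          exact hroot _ (hmem t₀)
        have hclopen : IsClopen {t : ℝ | lam (t, b) = -t / b} := by
          refine ⟨isClosed_eq hcont hline, isOpen_iff_mem_nhds.2 fun t ht => ?_⟩
          obtain ⟨ψ, -, huniq⟩ := hloc (t, b) (hmem t)
          have h1 : Tendsto (fun s : ℝ => ((s, b), lam (s, b))) (𝓝 t)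
              (𝓝 ((t, b), lam (t, b))) :=
            ((by fun_prop : Continuous fun s : ℝ => (s, b)).prodMk hcont).tendsto t
          have h2 : Tendsto (fun s : ℝ => ((s, b), -s / b)) (𝓝 t)
              (𝓝 ((t, b), lam (t, b))) := by
            rw [show lam (t, b) = -t / b from ht]
            exact Continuous.tendsto (f := fun s : ℝ => ((s, b), -s / b)) (by fun_prop) t
          filter_upwards [h1.eventually huniq, h2.eventually huniq] with s hs1 hs2
          exact (hs1.1 (hroot _ (hmem s))).symm.trans (hs2.1 (hzero s))
        have h0 : (0 : ℝ) ∈ {t : ℝ | lam (t, b) = -t / b} := by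
          rw [hclopen.eq_univ ⟨t₀, ht₀'⟩]
          trivial
        have h0' : lam (0, b) = 0 := by simpa using h0
        exact (hpos b hb).ne' h0'
      by_contra hneg
      have hneg' : a + b * lam (a, b) < 0 := not_le.1 hneg
      have h0pos : 0 < (0 : ℝ) + b * lam (0, b) := by
        have := mul_pos hb (hpos b hb)
        linarith
      obtain ⟨t, ht⟩ := mem_range_of_exists_le_of_exists_ge
        (f := fun t : ℝ => t + b * lam (t, b)) (continuous_id.add (hcont.const_mul b)) ⟨a, hneg'.le⟩ ⟨0, h0pos.le⟩
      exact hne t ht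
end

section
/- Consider the control-affine system ẋ = f(x) + g(x)u on ℝⁿ with inputs u ∈ ℝᵐ, where f : ℝⁿ → ℝⁿ and g : ℝⁿ → ℝ^{n×m} are smooth (C^∞). Let h : ℝⁿ → ℝ, α : ℝ → ℝ, and k_d : ℝⁿ → ℝᵐ be smooth, and define the Lie derivatives L_f h(x) := ⟨∇h(x), f(x)⟩ and L_g h(x) := g(x)ᵀ∇h(x) ∈ ℝᵐ, and the functions a(x) := L_f h(x) + ⟨L_g h(x), k_d(x)⟩ + α(h(x)) and b(x) := ‖L_g h(x)‖². Assume that for every x ∈ ℝⁿ either L_g h(x) ≠ 0 or L_f h(x) + α(h(x)) > 0 (so that (a(x), b(x)) ∈ S for all x). Let F : ℝ³ → ℝ be smooth such that for all b > 0 and a ∈ ℝ, (∂F/∂p)(a, b, −a/b) = b·(∂F/∂a)(a, b, −a/b), and let λ : S → ℝ be continuous with F(a, b, λ(a,b)) = 0 and (∂F/∂p)(a, b, λ(a,b)) ≠ 0 on S and λ(0, b) > 0 for all b > 0. Then the controller k_s(x) := k_d(x) + λ(a(x), b(x))·L_g h(x) is smooth (C^∞) on ℝⁿ and satisfies L_f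 h(x) + ⟨L_g h(x), k_s(x)⟩ + α(h(x)) ≥ 0 for all x ∈ ℝⁿ. -/
/-!
Write `y = (a, b)`. Near every point of `S` the root `lam` coincides with a smooth local solution of
`F(y, p) = 0` furnished by the implicit function theorem, because `lam` is continuous on `S` and
`∂F/∂p ≠ 0` on its graph; the local solution is defined on a full neighbourhood, which takes care of
the points of `S` on the boundary `b = 0`. Since `x ↦ (a x, b x)` is smooth with values in `S`,
the controller is smooth.

The safety condition reads `a + b * lam (a, b) ≥ 0`. For fixed `b > 0` the hypothesis relating the
partial derivatives says that `a' ↦ F(a', b, -a'/b)` is constant. If `lam (a₀, b) = -a₀/b` for one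
`a₀`, this constant is zero, so `-a'/b` is a root for every `a'`; by local uniqueness of roots the
set of `a'` with `lam (a', b) = -a'/b` is then open, and it is closed, so it is all of `ℝ`. This
contradicts `lam (0, b) > 0`. Hence `a' + b * lam (a', b)` never vanishes, and it is positive
at `a' = 0`, so it is positive everywhere.
-/

open RealInnerProductSpace

open Filter Topology

/-- The partial derivative in the last argument as a directional Fréchet derivative. -/
lemma hasDerivAt_snd {G : (ℝ × ℝ) × ℝ → ℝ} (hG : ContDiff ℝ (⊤ : ℕ∞) G) (z : (ℝ × ℝ) × ℝ) :
    HasDerivAt (fun p => G (z.1, p)) (fderiv ℝ G z (0, 1)) z.2 := by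
  have h1 : HasFDerivAt G (fderiv ℝ G z) (z.1, z.2) :=
    (hG.differentiable (by simp) z).hasFDerivAt
  exact h1.comp_hasDerivAt z.2 ((hasDerivAt_const z.2 z.1).prodMk (hasDerivAt_id z.2))

/-- Scalar implicit function theorem: near a zero `z` of `G` at which the last partial derivative
does not vanish, the zero set of `G` is the graph of a smooth function. -/
lemma exists_smooth_local_root {G : (ℝ × ℝ) × ℝ → ℝ} (hG : ContDiff ℝ (⊤ : ℕ∞) G)
    (z : (ℝ × ℝ) × ℝ) (hz : G z = 0) (hz' : deriv (fun p => G (z.1, p)) z.2 ≠ 0) :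
    ∃ ψ : ℝ × ℝ → ℝ, ContDiffAt ℝ (⊤ : ℕ∞) ψ z.1 ∧ ∀ᶠ v in 𝓝 z, G v = 0 ↔ ψ v.1 = v.2 := by
  rw [(hasDerivAt_snd hG z).deriv] at hz'
  have hn : ((⊤ : ℕ∞) : WithTop ℕ∞) ≠ 0 := by simp
  have inv : (fderiv ℝ G z ∘L .inr ℝ (ℝ × ℝ) ℝ).IsInvertible := by
    refine ⟨ContinuousLinearEquiv.unitsEquivAut ℝ (Units.mk0 _ hz'), ?_⟩
    ext
    simp
  refine ⟨hG.contDiffAt.implicitFunction hn inv,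
    hG.contDiffAt.contDiffAt_implicitFunction hn inv, ?_⟩
  simpa only [hz] using hG.contDiffAt.eventually_apply_eq_iff_implicitFunction hn inv

/-- The relation between the partial derivatives of `G` along the curve `a ↦ (a, b, -a/b)` says
exactly that `G` is constant on it. -/
lemma const_along_line {G : (ℝ × ℝ) × ℝ → ℝ} (hG : ContDiff ℝ (⊤ : ℕ∞) G) {b : ℝ} (hb : 0 < b)
    (hinv : ∀ a : ℝ, deriv (fun p => G ((a, b), p)) (-a / b)
      = b * deriv (fun a' => G ((a', b), -a / b)) a) (a a' : ℝ) :
    G ((a, b), -a / b) = G ((a', b), -a' / b) := by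
  have key : ∀ t : ℝ, HasDerivAt (fun a => G ((a, b), -a / b)) 0 t := by
    intro t
    have hd : HasFDerivAt G (fderiv ℝ G ((t, b), -t / b)) ((t, b), -t / b) :=
      (hG.differentiable (by simp) _).hasFDerivAt
    have hA : HasDerivAt (fun a' : ℝ => G ((a', b), -t / b))
        (fderiv ℝ G ((t, b), -t / b) ((1, 0), 0)) t :=
      HasFDerivAt.comp_hasDerivAt (f := fun a' : ℝ => ((a', b), -t / b)) t hd
        (((hasDerivAt_id t).prodMk (hasDerivAt_const t b)).prodMk (hasDerivAt_const t (-t / b)))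
    have hP := hasDerivAt_snd hG ((t, b), -t / b)
    have hL : HasDerivAt (fun a => G ((a, b), -a / b))
        (fderiv ℝ G ((t, b), -t / b) ((1, 0), -1 / b)) t :=
      HasFDerivAt.comp_hasDerivAt (f := fun a : ℝ => ((a, b), -a / b)) t hd
        (((hasDerivAt_id t).prodMk (hasDerivAt_const t b)).prodMk
          ((hasDerivAt_id t).neg.div_const b))
    have hi := hinv t
    rw [hA.deriv, hP.deriv] at hi
    have hv : (((1, 0), -1 / b) : (ℝ × ℝ) × ℝ) = ((1, 0), 0) + (-1 / b) • (0, 1) := by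
      ext <;> simp
    rw [hv, map_add, map_smul, hi] at hL
    convert hL using 1
    simp only [smul_eq_mul]
    field_simp
    ring
  exact is_const_of_deriv_eq_zero (fun t => (key t).differentiableAt) (fun t => (key t).deriv) a a'

/-- A continuous branch `l` of simple roots along the line `b = const > 0` that is positive at
`a = 0` lies strictly above the curve `a ↦ -a/b`. -/
lemma pos_of_root {G : (ℝ × ℝ) × ℝ → ℝ} (hG : ContDiff ℝ (⊤ : ℕ∞) G) {b : ℝ} (hb : 0 < b)
    (hinv : ∀ a : ℝ, deriv (fun p => G ((a, b), p)) (-a / b)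
      = b * deriv (fun a' => G ((a', b), -a / b)) a)
    {l : ℝ → ℝ} (hl : Continuous l) (hroot : ∀ a, G ((a, b), l a) = 0)
    (hp : ∀ a, deriv (fun p => G ((a, b), p)) (l a) ≠ 0) (h0 : 0 < l 0) (a : ℝ) :
    0 < a + b * l a := by
  have hq : Continuous fun a : ℝ => -a / b := by fun_prop
  have hclosed : IsClosed {a : ℝ | l a = -a / b} := isClosed_eq hl hq
  have hopen : IsOpen {a : ℝ | l a = -a / b} := by
    rw [isOpen_iff_mem_nhds]
    intro a₀ (ha₀ : l a₀ = -a₀ / b)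
    have hzero : ∀ a, G ((a, b), -a / b) = 0 := fun a => by
      rw [const_along_line hG hb hinv a a₀, ← ha₀, hroot]
    obtain ⟨ψ, -, hψ⟩ := exists_smooth_local_root hG ((a₀, b), l a₀) (hroot a₀) (hp a₀)
    have t1 : Tendsto (fun a => ((a, b), l a)) (𝓝 a₀) (𝓝 ((a₀, b), l a₀)) :=
      Continuous.tendsto (f := fun a => ((a, b), l a)) (by fun_prop) a₀
    have t2 : Tendsto (fun a => ((a, b), -a / b)) (𝓝 a₀) (𝓝 ((a₀, b), l a₀)) := by
      rw [ha₀]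
      exact Continuous.tendsto (f := fun a : ℝ => ((a, b), -a / b)) (by fun_prop) a₀
    filter_upwards [t1.eventually hψ, t2.eventually hψ] with a h1 h2
    exact (h1.1 (hroot a)).symm.trans (h2.1 (hzero a))
  have hne : ∀ a, l a ≠ -a / b := by
    rcases isClopen_iff.1 ⟨hclosed, hopen⟩ with h | h
    · intro a ha
      exact (h ▸ ha : a ∈ (∅ : Set ℝ))
    · have h1 : (0 : ℝ) ∈ {a : ℝ | l a = -a / b} := h ▸ Set.mem_univ 0
      have h2 : l 0 = -0 / b := h1
      simp [h0.ne'] at h2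
  by_contra hneg
  have hcont : Continuous fun t => t + b * l t := by fun_prop
  obtain ⟨c, hc⟩ := mem_range_of_exists_le_of_exists_ge hcont ⟨a, not_lt.1 hneg⟩
    ⟨0, by simpa using (mul_pos hb h0).le⟩
  apply hne c
  rw [eq_div_iff hb.ne']
  have hc' : c + b * l c = 0 := hc
  linarith

/-- Theorem 2: smooth safety filter for a control-affine system.
For the control-affine system `ẋ = f(x) + g(x)u` with smooth data, CBF data `h, α, k_d`, the
Lie derivatives `L_f h(x) = ⟪∇h(x), f(x)⟫` and `L_g h(x) = g(x)ᵀ∇h(x)`, and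
`a(x) = L_f h(x) + ⟪L_g h(x), k_d(x)⟫ + α(h(x))`, `b(x) = ‖L_g h(x)‖²`, if `(a(x),b(x)) ∈ S`
for all `x` and `lam : S → ℝ` is a continuous implicit solution of a smooth `F` satisfying the
invariance condition with `lam(0,b) > 0` for `b > 0`, then
`k_s(x) = k_d(x) + lam(a(x),b(x))·L_g h(x)` is smooth and satisfies the CBF condition
`L_f h(x) + ⟪L_g h(x), k_s(x)⟫ + α(h(x)) ≥ 0` everywhere. -/
theorem smooth_safety_filter
    (n m : ℕ)
    (f : EuclideanSpace ℝ (Fin n) → EuclideanSpace ℝ (Fin n))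
    (g : EuclideanSpace ℝ (Fin n) → EuclideanSpace ℝ (Fin m) →L[ℝ] EuclideanSpace ℝ (Fin n))
    (hf : ContDiff ℝ (⊤ : ℕ∞) f) (hg : ContDiff ℝ (⊤ : ℕ∞) g)
    (h : EuclideanSpace ℝ (Fin n) → ℝ) (hh : ContDiff ℝ (⊤ : ℕ∞) h)
    (α : ℝ → ℝ) (hα : ContDiff ℝ (⊤ : ℕ∞) α)
    (kd : EuclideanSpace ℝ (Fin n) → EuclideanSpace ℝ (Fin m)) (hkd : ContDiff ℝ (⊤ : ℕ∞) kd)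
    (Lfh : EuclideanSpace ℝ (Fin n) → ℝ)
    (hLfh : ∀ x, Lfh x = ⟪gradient h x, f x⟫)
    (Lgh : EuclideanSpace ℝ (Fin n) → EuclideanSpace ℝ (Fin m))
    (hLgh : ∀ x, Lgh x = ContinuousLinearMap.adjoint (g x) (gradient h x))
    (a b : EuclideanSpace ℝ (Fin n) → ℝ)
    (ha : ∀ x, a x = Lfh x + ⟪Lgh x, kd x⟫ + α (h x))
    (hb : ∀ x, b x = ‖Lgh x‖ ^ 2)
    (hfeas : ∀ x, Lgh x ≠ 0 ∨ 0 < Lfh x + α (h x))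
    (S : Set (ℝ × ℝ)) (hSdef : S = {y : ℝ × ℝ | 0 ≤ y.2 ∧ (0 < y.1 ∨ 0 < y.2)})
    (F : ℝ → ℝ → ℝ → ℝ)
    (hF : ContDiff ℝ (⊤ : ℕ∞) (fun x : ℝ × ℝ × ℝ => F x.1 x.2.1 x.2.2))
    (hinv : ∀ b' > (0 : ℝ), ∀ a' : ℝ,
      deriv (fun p => F a' b' p) (-a' / b') = b' * deriv (fun a'' => F a'' b' (-a' / b')) a')
    (lam : ℝ × ℝ → ℝ) (hlam : ContinuousOn lam S)
    (hroot : ∀ y ∈ S, F y.1 y.2 (lam y) = 0)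
    (hFp : ∀ y ∈ S, deriv (fun p => F y.1 y.2 p) (lam y) ≠ 0)
    (hpos : ∀ b' > (0 : ℝ), lam (0, b') > 0)
    (ks : EuclideanSpace ℝ (Fin n) → EuclideanSpace ℝ (Fin m))
    (hks : ∀ x, ks x = kd x + lam (a x, b x) • Lgh x) :
    ContDiff ℝ (⊤ : ℕ∞) ks ∧ ∀ x, Lfh x + ⟪Lgh x, ks x⟫ + α (h x) ≥ 0 := by
  have hG : ContDiff ℝ (⊤ : ℕ∞) (fun z : (ℝ × ℝ) × ℝ => F z.1.1 z.1.2 z.2) :=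
    hF.comp (g := fun x : ℝ × ℝ × ℝ => F x.1 x.2.1 x.2.2)
      (f := fun z : (ℝ × ℝ) × ℝ => (z.1.1, z.1.2, z.2)) (by fun_prop)
  have hS : ∀ x, (a x, b x) ∈ S := by
    intro x
    rw [hSdef]
    refine ⟨by simp only [hb]; positivity, ?_⟩
    by_cases hL : Lgh x = 0
    · left
      have := (hfeas x).resolve_left (not_not.2 hL)
      simpa [ha, hL] using this
    · right
      simp only [hb]
      positivity
  constructor
  · have hgrad : ContDiff ℝ (⊤ : ℕ∞) (gradient h) :=
      (InnerProductSpace.toDual ℝ _).symm.contDiff.comp (hh.fderiv_right (m := (⊤ : ℕ∞)) (by simp))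
    have sLf : ContDiff ℝ (⊤ : ℕ∞) Lfh := by
      rw [funext hLfh]
      exact hgrad.inner ℝ hf
    have sLg : ContDiff ℝ (⊤ : ℕ∞) Lgh := by
      rw [funext hLgh]
      exact ((ContinuousLinearMap.adjoint (𝕜 := ℝ) (E := EuclideanSpace ℝ (Fin m))
        (F := EuclideanSpace ℝ (Fin n))).contDiff.comp hg).clm_apply hgrad
    have sa : ContDiff ℝ (⊤ : ℕ∞) a := by
      rw [funext ha]
      exact (sLf.add (sLg.inner ℝ hkd)).add (hα.comp hh)
    have sb : ContDiff ℝ (⊤ : ℕ∞) b := by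
      rw [funext hb]
      exact sLg.norm_sq ℝ
    have sab : ContDiff ℝ (⊤ : ℕ∞) (fun x => (a x, b x)) := sa.prodMk sb
    rw [funext hks]
    suffices hs : ContDiff ℝ (⊤ : ℕ∞) (fun x => lam (a x, b x)) from hkd.add (hs.fun_smul sLg)
    rw [contDiff_iff_contDiffAt]
    intro x
    obtain ⟨ψ, hψs, hψ⟩ := exists_smooth_local_root hG ((a x, b x), lam (a x, b x))
      (hroot _ (hS x)) (hFp _ (hS x))
    have hc : Tendsto (fun x' => lam (a x', b x')) (𝓝 x) (𝓝 (lam (a x, b x))) :=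
      (hlam _ (hS x)).tendsto.comp
        (tendsto_nhdsWithin_iff.2 ⟨sab.continuous.tendsto x, Eventually.of_forall hS⟩)
    have ht := (sab.continuous.tendsto x).prodMk_nhds hc
    refine (ContDiffAt.comp x (f := fun x => (a x, b x)) hψs sab.contDiffAt).congr_of_eventuallyEq ?_
    filter_upwards [ht.eventually hψ] with x' hx'
    exact (hx'.1 (hroot _ (hS x'))).symm
  · intro x
    have e : Lfh x + ⟪Lgh x, ks x⟫ + α (h x) = a x + b x * lam (a x, b x) := by
      rw [hks, inner_add_right, inner_smul_right, real_inner_self_eq_norm_sq, ← hb]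
      linarith [ha x]
    rw [e]
    by_cases hL : Lgh x = 0
    · have := (hfeas x).resolve_left (not_not.2 hL)
      simpa [ha, hb, hL] using this.le
    · have hbx : 0 < b x := by
        rw [hb]
        positivity
      have hmem : ∀ t, (t, b x) ∈ S := fun t => by
        rw [hSdef]
        exact ⟨hbx.le, Or.inr hbx⟩
      exact (pos_of_root hG hbx (hinv _ hbx) (l := fun t => lam (t, b x))
        (hlam.comp_continuous (by fun_prop) hmem) (fun t => hroot _ (hmem t))
        (fun t => hFp _ (hmem t)) (hpos _ hbx) (a x)).le
end

section
/- Let q : ℝ → ℝ be smooth (C^∞) with q(0) = 0 and q(b) > 0 for all b ≠ 0. Define S_CLF := {(a,b) ∈ ℝ² : b ≥ 0 and (a < 0 or b > 0)} and λ_CLF(a,b) := 0 if b = 0, and λ_CLF(a,b) := (−a − √(a² + q(b)·b))/b if b > 0. Then λ_CLF is continuous on S_CLF, smooth (C^∞) on S_CLF, and satisfies a + b·λ_CLF(a,b) < 0 for all (a,b) ∈ S_CLF. -/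
/-!
Writing `s = √(a² + q(b) b)`, the identity `(-a - s)(s - a) = a² - s² = -q(b) b` turns Sontag's
quotient into `-q(b) / (s - a)`. This form is also correct at `b = 0`, because `q 0 = 0`, and on the
whole of `SCLF` both the radicand and the denominator `s - a` are positive. Hence `λ_CLF` agrees on
`SCLF` with a composition of smooth functions, and continuity follows. For the decrease condition,
`a + b λ_CLF(a, b)` equals `-s < 0` when `b > 0`, and `a < 0` when `b = 0`.
-/


/-- Sontag's universal formula for stabilization.
With `q` smooth, `q(0) = 0`, `q(b) > 0` for `b ≠ 0`, the function
`λ_CLF(a,b) = 0` if `b = 0` and `(-a - √(a² + q(b)·b))/b` if `b ≠ 0` is continuous and smooth on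
`S_CLF = {(a,b) : b ≥ 0 ∧ (a < 0 ∨ b > 0)}` and satisfies `a + b·λ_CLF(a,b) < 0` there. -/
theorem sontag_clf_formula
    (q : ℝ → ℝ) (hq : ContDiff ℝ (⊤ : ℕ∞) q) (hq0 : q 0 = 0) (hqpos : ∀ b : ℝ, b ≠ 0 → 0 < q b)
    (SCLF : Set (ℝ × ℝ))
    (hSdef : SCLF = {x : ℝ × ℝ | 0 ≤ x.2 ∧ (x.1 < 0 ∨ 0 < x.2)})
    (lamCLF : ℝ × ℝ → ℝ)
    (hlamdef : ∀ x : ℝ × ℝ,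
      lamCLF x = if x.2 = 0 then 0 else (-x.1 - Real.sqrt (x.1 ^ 2 + q x.2 * x.2)) / x.2) :
    ContinuousOn lamCLF SCLF ∧ ContDiffOn ℝ (⊤ : ℕ∞) lamCLF SCLF ∧
      ∀ x ∈ SCLF, x.1 + x.2 * lamCLF x < 0 := by
  subst hSdef
  have hrad : ∀ x ∈ {x : ℝ × ℝ | 0 ≤ x.2 ∧ (x.1 < 0 ∨ 0 < x.2)},
      0 < x.1 ^ 2 + q x.2 * x.2 := by
    rintro ⟨a, b⟩ ⟨hb, h⟩
    dsimp only at hb h ⊢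
    rcases hb.eq_or_lt with rfl | hb'
    · have ha : a < 0 := h.resolve_right (lt_irrefl 0)
      nlinarith
    · have := mul_pos (hqpos b hb'.ne') hb'
      positivity
  have hden : ∀ x ∈ {x : ℝ × ℝ | 0 ≤ x.2 ∧ (x.1 < 0 ∨ 0 < x.2)},
      0 < √(x.1 ^ 2 + q x.2 * x.2) - x.1 := by
    intro x hx
    have hs := Real.sqrt_pos.2 (hrad x hx)
    rcases hx.2 with ha | hb
    · linarith
    · have := mul_pos (hqpos x.2 hb.ne') hb
      exact sub_pos.2 (Real.lt_sqrt_of_sq_lt (by linarith))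
  have hform : ∀ x ∈ {x : ℝ × ℝ | 0 ≤ x.2 ∧ (x.1 < 0 ∨ 0 < x.2)},
      lamCLF x = -q x.2 / (√(x.1 ^ 2 + q x.2 * x.2) - x.1) := by
    intro x hx
    rw [hlamdef]
    split_ifs with hb
    · simp [hb, hq0]
    · rw [div_eq_div_iff hb (hden x hx).ne']
      linear_combination -Real.sq_sqrt (hrad x hx).le
  have hq2 : ContDiff ℝ (⊤ : ℕ∞) fun x : ℝ × ℝ => q x.2 := hq.comp contDiff_snd
  have hsmooth : ContDiffOn ℝ (⊤ : ℕ∞) lamCLF {x : ℝ × ℝ | 0 ≤ x.2 ∧ (x.1 < 0 ∨ 0 < x.2)} := by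
    refine ContDiffOn.congr ?_ hform
    refine hq2.neg.contDiffOn.div (ContDiffOn.sub ?_ contDiff_fst.contDiffOn)
      fun x hx => (hden x hx).ne'
    exact ((contDiff_fst.pow 2).add (hq2.mul contDiff_snd)).contDiffOn.sqrt
      fun x hx => (hrad x hx).ne'
  refine ⟨hsmooth.continuousOn, hsmooth, fun x hx => ?_⟩
  rw [hlamdef]
  split_ifs with hb
  · have ha : x.1 < 0 := hx.2.resolve_right (by simp [hb])
    simpa using ha
  · rw [mul_div_cancel₀ _ hb]
    have hs := Real.sqrt_pos.2 (hrad x hx)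
    linarith
end

section
/- Let q : ℝ → ℝ be smooth (C^∞) with q(0) = 0 and q(b) > 0 for all b ≠ 0, and define F(a,b,p) := b·p² + 2a·p − q(b) and λ_S(a,b) := 0 if b = 0, and λ_S(a,b) := (−a + √(a² + q(b)·b))/b if b > 0. Then λ_S is continuous on S, and for all (a,b) ∈ S it satisfies F(a, b, λ_S(a,b)) = 0 and (∂F/∂p)(a, b, λ_S(a,b)) = 2(a + b·λ_S(a,b)) = 2√(a² + q(b)·b) > 0; consequently λ_S is smooth (C^∞) on S. -/
/-! On all of `S` the radicand `a² + q(b)·b` and the sum `a + √(a² + q(b)·b)` are positive: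
for `b = 0` we have `a > 0`, and for `b > 0` we have `√(a² + q(b)·b) > |a|`. Multiplying by the
conjugate, the two branches of `λ_S` merge into the single formula
`λ_S(a,b) = q(b) / (a + √(a² + q(b)·b))`, which has no division by `b` and is therefore visibly
smooth at every point of `S`, so the implicit function theorem is not needed. The identities for
`F` and `∂F/∂p` reduce to `b·λ_S(a,b) = -a + √(a² + q(b)·b)`. -/

/-- On `S` the radicand and the denominator of the conjugate formula are positive. -/
theorem sontag_pos {q : ℝ → ℝ} (hqpos : ∀ b : ℝ, b ≠ 0 → 0 < q b) {a b : ℝ}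
    (hb : 0 ≤ b) (hab : 0 < a ∨ 0 < b) :
    0 < a ^ 2 + q b * b ∧ 0 < a + Real.sqrt (a ^ 2 + q b * b) := by
  rcases hb.eq_or_lt with rfl | hb'
  · have ha : 0 < a := by simpa using hab
    exact ⟨by simp; positivity, by positivity⟩
  · have hqb : 0 < q b * b := mul_pos (hqpos b hb'.ne') hb'
    have h : |a| < Real.sqrt (a ^ 2 + q b * b) := by
      rw [← Real.sqrt_sq_eq_abs]
      exact Real.sqrt_lt_sqrt (sq_nonneg a) (by linarith)
    exact ⟨by positivity, by linarith [neg_abs_le a]⟩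

/-- Sontag-type universal formula for safety.
With `q` smooth, `q(0) = 0`, `q(b) > 0` for `b ≠ 0`, `F(a,b,p) = b·p² + 2a·p − q(b)` and
`λ_S(a,b) = 0` if `b = 0`, `(-a + √(a² + q(b)·b))/b` if `b > 0`, the function `λ_S` is
continuous on `S = {(a,b) : b ≥ 0 ∧ (a > 0 ∨ b > 0)}`, satisfies `F(a,b,λ_S(a,b)) = 0` and
`∂F/∂p (a,b,λ_S(a,b)) = 2(a + b·λ_S(a,b)) = 2√(a² + q(b)·b) > 0` on `S`, and consequently is
smooth on `S`. -/
theorem sontag_safety_formula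
    (q : ℝ → ℝ) (hq : ContDiff ℝ (⊤ : ℕ∞) q) (hq0 : q 0 = 0) (hqpos : ∀ b : ℝ, b ≠ 0 → 0 < q b)
    (S : Set (ℝ × ℝ))
    (hSdef : S = {x : ℝ × ℝ | 0 ≤ x.2 ∧ (0 < x.1 ∨ 0 < x.2)})
    (F : ℝ → ℝ → ℝ → ℝ)
    (hFdef : ∀ a b p : ℝ, F a b p = b * p ^ 2 + 2 * a * p - q b)
    (lamS : ℝ × ℝ → ℝ)
    (hlamdef : ∀ x : ℝ × ℝ,
      lamS x = if x.2 = 0 then 0 else (-x.1 + Real.sqrt (x.1 ^ 2 + q x.2 * x.2)) / x.2) :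
    ContinuousOn lamS S ∧
      (∀ x ∈ S, F x.1 x.2 (lamS x) = 0) ∧
      (∀ x ∈ S,
        deriv (fun p => F x.1 x.2 p) (lamS x) = 2 * (x.1 + x.2 * lamS x) ∧
        2 * (x.1 + x.2 * lamS x) = 2 * Real.sqrt (x.1 ^ 2 + q x.2 * x.2) ∧
        0 < 2 * Real.sqrt (x.1 ^ 2 + q x.2 * x.2)) ∧
      ContDiffOn ℝ (⊤ : ℕ∞) lamS S := by
  subst hSdef
  have hpos : ∀ x ∈ {x : ℝ × ℝ | 0 ≤ x.2 ∧ (0 < x.1 ∨ 0 < x.2)},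
      0 < x.1 ^ 2 + q x.2 * x.2 ∧ 0 < x.1 + Real.sqrt (x.1 ^ 2 + q x.2 * x.2) :=
    fun x hx => sontag_pos hqpos hx.1 hx.2
  have hlam : ∀ x ∈ {x : ℝ × ℝ | 0 ≤ x.2 ∧ (0 < x.1 ∨ 0 < x.2)},
      lamS x = q x.2 / (x.1 + Real.sqrt (x.1 ^ 2 + q x.2 * x.2)) := by
    intro x hx
    obtain ⟨hr, hd⟩ := hpos x hx
    have hs := Real.sq_sqrt hr.le
    rw [hlamdef]
    split_ifs with h0
    · simp [h0, hq0]
    · rw [div_eq_div_iff h0 hd.ne']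
      linear_combination hs
  have hmul : ∀ x ∈ {x : ℝ × ℝ | 0 ≤ x.2 ∧ (0 < x.1 ∨ 0 < x.2)},
      x.2 * lamS x = -x.1 + Real.sqrt (x.1 ^ 2 + q x.2 * x.2) := by
    intro x hx
    obtain ⟨hr, hd⟩ := hpos x hx
    have hs := Real.sq_sqrt hr.le
    rw [hlam x hx, mul_div_assoc', div_eq_iff hd.ne']
    linear_combination -hs
  have hsmooth : ContDiffOn ℝ (⊤ : ℕ∞) lamS {x : ℝ × ℝ | 0 ≤ x.2 ∧ (0 < x.1 ∨ 0 < x.2)} := by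
    refine ContDiffOn.congr (fun x hx => ?_) hlam
    obtain ⟨hr, hd⟩ := hpos x hx
    have hq2 : ContDiffAt ℝ (⊤ : ℕ∞) (fun x : ℝ × ℝ => q x.2) x :=
      (hq.comp contDiff_snd).contDiffAt
    have hrad : ContDiffAt ℝ (⊤ : ℕ∞) (fun x : ℝ × ℝ => x.1 ^ 2 + q x.2 * x.2) x :=
      (contDiffAt_fst.pow 2).add (hq2.mul contDiffAt_snd)
    exact (hq2.div (contDiffAt_fst.add (hrad.sqrt hr.ne')) hd.ne').contDiffWithinAt
  refine ⟨hsmooth.continuousOn, fun x hx => ?_, fun x hx => ⟨?_, ?_, ?_⟩, hsmooth⟩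
  · obtain ⟨hr, hd⟩ := hpos x hx
    have h1 := hmul x hx
    have h2 : lamS x * (x.1 + Real.sqrt (x.1 ^ 2 + q x.2 * x.2)) = q x.2 := by
      rw [hlam x hx, div_mul_cancel₀ _ hd.ne']
    rw [hFdef]
    -- `b·p² + 2a·p = p·(b·p + 2a) = p·(a + √(a² + q(b)·b)) = q(b)` at `p = λ_S(a,b)`
    linear_combination lamS x * h1 + h2
  · have hF : (fun p => F x.1 x.2 p) = fun p => x.2 * p ^ 2 + 2 * x.1 * p - q x.2 :=
      funext fun p => hFdef _ _ _
    have hder : HasDerivAt (fun p : ℝ => x.2 * p ^ 2 + 2 * x.1 * p - q x.2)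
        (2 * (x.1 + x.2 * lamS x)) (lamS x) := by
      have h := ((((hasDerivAt_id' (lamS x)).fun_pow 2).const_mul x.2).fun_add
        ((hasDerivAt_id' (lamS x)).const_mul (2 * x.1))).sub_const (q x.2)
      refine h.congr_deriv ?_
      push_cast
      ring
    rw [hF, hder.deriv]
  · rw [hmul x hx]
    ring
  · have := Real.sqrt_pos.2 (hpos x hx).1
    positivity
end

section
/- Let q : ℝ → ℝ satisfy q(0) = 0 and q(b) > 0 for all b ≠ 0, and define λ_S(a,b) := 0 if b = 0, and λ_S(a,b) := (−a + √(a² + q(b)·b))/b if b > 0. Then for all (a,b) ∈ S: λ_S(a,b) ≥ 0, a + (b/2)·λ_S(a,b) ≥ 0, and hence a + b·λ_S(a,b) ≥ 0. In particular, for every ε ≥ 1 the function λ(a,b) := (ε/2)·λ_S(a,b) satisfies λ(a,b) ≥ 0 and a + (1/ε)·b·λ(a,b) ≥ 0 for all (a,b) ∈ S. -/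
/-!
For `b > 0` put `r = √(a² + q(b) b)`. Since `q(b) b > 0`, we have `|a| ≤ r`, so `b λ_S = r - a ≥ 0`,
`a + (b/2) λ_S = (a + r)/2 ≥ 0` and `a + b λ_S = r ≥ 0`. For `b = 0`, membership in `S` forces
`a > 0`, while `λ_S = 0`. The claim for general `ε` is the middle inequality, since
`(1/ε) (ε/2) = 1/2`.
-/

/-- Sontag's safety formula lies in the tightened set `H_b^ε ∩ ℝ≥0`, ε = 2.
With `q(0) = 0` and `q(b) > 0` for `b ≠ 0`, the formula `λ_S` satisfies, on
`S = {(a,b) : b ≥ 0 ∧ (a > 0 ∨ b > 0)}`: `λ_S ≥ 0`, `a + (b/2)·λ_S(a,b) ≥ 0`, hence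
`a + b·λ_S(a,b) ≥ 0`; and for every `ε ≥ 1` the scaled formula `λ = (ε/2)·λ_S` satisfies
`λ ≥ 0` and `a + (1/ε)·b·λ(a,b) ≥ 0` on `S`. -/
theorem sontag_safety_tightened
    (q : ℝ → ℝ) (hq0 : q 0 = 0) (hqpos : ∀ b : ℝ, b ≠ 0 → 0 < q b)
    (S : Set (ℝ × ℝ))
    (hSdef : S = {x : ℝ × ℝ | 0 ≤ x.2 ∧ (0 < x.1 ∨ 0 < x.2)})
    (lamS : ℝ × ℝ → ℝ)
    (hlamdef : ∀ x : ℝ × ℝ,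
      lamS x = if x.2 = 0 then 0 else (-x.1 + Real.sqrt (x.1 ^ 2 + q x.2 * x.2)) / x.2) :
    (∀ x ∈ S, 0 ≤ lamS x ∧ x.1 + (x.2 / 2) * lamS x ≥ 0 ∧ x.1 + x.2 * lamS x ≥ 0) ∧
      ∀ ε : ℝ, 1 ≤ ε → ∀ x ∈ S,
        0 ≤ (ε / 2) * lamS x ∧ x.1 + (1 / ε) * x.2 * ((ε / 2) * lamS x) ≥ 0 := by
  have key : ∀ x ∈ S,
      0 ≤ lamS x ∧ x.1 + (x.2 / 2) * lamS x ≥ 0 ∧ x.1 + x.2 * lamS x ≥ 0 := by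
    rintro ⟨a, b⟩ hx
    rw [hSdef] at hx
    obtain ⟨hb, hab⟩ := hx
    simp only at hb hab
    rw [hlamdef]
    rcases hb.eq_or_lt with rfl | hb
    · have ha : 0 < a := by simpa using hab
      simp [ha.le]
    · have habs : |a| ≤ Real.sqrt (a ^ 2 + q b * b) :=
        Real.abs_le_sqrt (le_add_of_nonneg_right (mul_pos (hqpos b hb.ne') hb).le)
      obtain ⟨h1, h2⟩ := abs_le.mp habs
      simp only [hb.ne', if_false]
      set r := Real.sqrt (a ^ 2 + q b * b)
      refine ⟨div_nonneg (by linarith) hb.le, ?_, ?_⟩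
      · have e : a + b / 2 * ((-a + r) / b) = (a + r) / 2 := by
          field_simp
          ring
        rw [e]
        linarith
      · rw [mul_div_cancel₀ _ hb.ne']
        linarith
  refine ⟨key, fun ε hε x hx => ?_⟩
  obtain ⟨h0, h1, -⟩ := key x hx
  have hε0 : 0 < ε := by linarith
  refine ⟨by positivity, ?_⟩
  -- The factors `1 / ε` and `ε / 2` combine to `1 / 2`, leaving the tightened inequality.
  have e : x.1 + (1 / ε) * x.2 * ((ε / 2) * lamS x) = x.1 + (x.2 / 2) * lamS x := by
    field_simp
  rw [e]
  exact h1
end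

section
/- Let q : ℝ → ℝ be smooth (C^∞) with q(0) = 0 and q(b) > 0 for all b ≠ 0, and define F₁(a,b,p) := b·p² + a·p − q(b)/4 and λ₁(a,b) := 0 if b = 0, and λ₁(a,b) := (−a + √(a² + b·q(b)))/(2b) if b > 0. Then λ₁ is continuous on S, smooth (C^∞) on S, satisfies F₁(a, b, λ₁(a,b)) = 0 and (∂F₁/∂p)(a, b, λ₁(a,b)) ≠ 0 for all (a,b) ∈ S, and satisfies a + b·λ₁(a,b) ≥ 0 for all (a,b) ∈ S. Moreover, for b > 0, λ₁(a,b) = (1/2)·λ_S(a,b), where λ_S(a,b) := (−a + √(a² + q(b)·b))/b. -/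
/-!
Put `D = a ^ 2 + b * q b`. It is positive on `S`, and `lam₁` is a root of the quadratic `F₁ a b` in
its third argument, with `a + 2 * b * lam₁ = √D > 0` there (`b = 0` forces `a > 0`); this is
`∂F₁/∂p`, and averaging it with `a` gives `a + b * lam₁ = (a + √D) / 2`, which is nonnegative since
`√D ≥ |a|`. Smoothness where `b > 0` is read off the defining formula. Near a point with `a > 0`,
including the boundary points `b = 0`, rationalizing the numerator gives
`lam₁ = q b / (2 * (a + √D))` on `S`, whose denominator does not vanish.
-/


/-- The "Half-Sontag" / Squareplus universal formula for safety.
With `q` smooth, `q(0) = 0`, `q(b) > 0` for `b ≠ 0`, `F₁(a,b,p) = b·p² + a·p − q(b)/4` and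
`λ₁(a,b) = 0` if `b = 0`, `(-a + √(a² + b·q(b)))/(2b)` if `b > 0`, the function `λ₁` is
continuous and smooth on `S = {(a,b) : b ≥ 0 ∧ (a > 0 ∨ b > 0)}`, satisfies
`F₁(a,b,λ₁(a,b)) = 0` and `∂F₁/∂p (a,b,λ₁(a,b)) ≠ 0` on `S`, satisfies `a + b·λ₁(a,b) ≥ 0` on
`S`, and for `b > 0` equals `(1/2)·λ_S(a,b)`. -/
theorem half_sontag_formula
    (q : ℝ → ℝ) (hq : ContDiff ℝ (⊤ : ℕ∞) q) (hq0 : q 0 = 0) (hqpos : ∀ b : ℝ, b ≠ 0 → 0 < q b)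
    (S : Set (ℝ × ℝ))
    (hSdef : S = {x : ℝ × ℝ | 0 ≤ x.2 ∧ (0 < x.1 ∨ 0 < x.2)})
    (F₁ : ℝ → ℝ → ℝ → ℝ)
    (hFdef : ∀ a b p : ℝ, F₁ a b p = b * p ^ 2 + a * p - q b / 4)
    (lam₁ : ℝ × ℝ → ℝ)
    (hlamdef : ∀ x : ℝ × ℝ,
      lam₁ x = if x.2 = 0 then 0
        else (-x.1 + Real.sqrt (x.1 ^ 2 + x.2 * q x.2)) / (2 * x.2)) :
    ContinuousOn lam₁ S ∧ ContDiffOn ℝ (⊤ : ℕ∞) lam₁ S ∧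
      (∀ x ∈ S, F₁ x.1 x.2 (lam₁ x) = 0) ∧
      (∀ x ∈ S, deriv (fun p => F₁ x.1 x.2 p) (lam₁ x) ≠ 0) ∧
      (∀ x ∈ S, x.1 + x.2 * lam₁ x ≥ 0) ∧
      ∀ a b : ℝ, 0 < b →
        lam₁ (a, b) = (1 / 2) * ((-a + Real.sqrt (a ^ 2 + q b * b)) / b) := by
  subst hSdef
  have hD : ∀ x : ℝ × ℝ, 0 ≤ x.2 ∧ (0 < x.1 ∨ 0 < x.2) → 0 < x.1 ^ 2 + x.2 * q x.2 := by
    rintro ⟨a, b⟩ ⟨hb, hab⟩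
    simp only at hb hab ⊢
    rcases hb.eq_or_lt with h | h
    · subst h
      have ha : 0 < a := by simpa using hab
      simp only [zero_mul, add_zero]
      positivity
    · have := mul_pos h (hqpos b h.ne')
      positivity
  have hroot : ∀ x : ℝ × ℝ, 0 ≤ x.2 ∧ (0 < x.1 ∨ 0 < x.2) →
      x.1 + 2 * x.2 * lam₁ x = Real.sqrt (x.1 ^ 2 + x.2 * q x.2) := by
    rintro ⟨a, b⟩ ⟨hb, hab⟩
    rw [hlamdef]
    simp only at hb hab ⊢
    rcases hb.eq_or_lt with h | h
    · subst h
      have ha : 0 < a := by simpa using hab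
      simp [Real.sqrt_sq ha.le]
    · rw [if_neg h.ne']
      field_simp
      ring
  have hF : ∀ x : ℝ × ℝ, 0 ≤ x.2 ∧ (0 < x.1 ∨ 0 < x.2) → F₁ x.1 x.2 (lam₁ x) = 0 := by
    intro x hx
    rw [hFdef]
    rcases hx.1.eq_or_lt with h | h
    · rw [hlamdef, ← h]
      simp [hq0]
    · -- Complete the square: `4 * b * F₁ a b p = (a + 2 * b * p) ^ 2 - D`.
      have h1 := Real.sq_sqrt (hD x hx).le
      rw [← hroot x hx] at h1
      have h2 : 4 * x.2 * (x.2 * lam₁ x ^ 2 + x.1 * lam₁ x - q x.2 / 4) = 0 := by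
        linear_combination h1
      exact (mul_eq_zero.mp h2).resolve_left (by positivity)
  have hsmooth : ContDiffOn ℝ (⊤ : ℕ∞) lam₁ {x : ℝ × ℝ | 0 ≤ x.2 ∧ (0 < x.1 ∨ 0 < x.2)} := by
    intro x hx
    have hq2 : ContDiffAt ℝ (⊤ : ℕ∞) (fun y : ℝ × ℝ => q y.2) x :=
      (hq.comp contDiff_snd).contDiffAt
    have hsqrt : ContDiffAt ℝ (⊤ : ℕ∞)
        (fun y : ℝ × ℝ => Real.sqrt (y.1 ^ 2 + y.2 * q y.2)) x :=
      ((contDiffAt_fst.pow 2).add (contDiffAt_snd.mul hq2)).sqrt (hD x hx).ne'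
    rcases hx.2 with ha | hb
    · have hg : ContDiffAt ℝ (⊤ : ℕ∞)
          (fun y : ℝ × ℝ => q y.2 / (2 * (y.1 + Real.sqrt (y.1 ^ 2 + y.2 * q y.2)))) x :=
        hq2.div (contDiffAt_const.mul (contDiffAt_fst.add hsqrt)) (by positivity)
      have hnear : ∀ᶠ y : ℝ × ℝ in nhds x, 0 < y.1 :=
        continuous_fst.continuousAt.eventually (lt_mem_nhds ha)
      have heq : ∀ y : ℝ × ℝ, 0 ≤ y.2 ∧ (0 < y.1 ∨ 0 < y.2) → 0 < y.1 →
          lam₁ y = q y.2 / (2 * (y.1 + Real.sqrt (y.1 ^ 2 + y.2 * q y.2))) := by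
        intro y hy hya
        have h1 := hF y hy
        rw [hFdef] at h1
        rw [eq_div_iff (by positivity), ← hroot y hy]
        linear_combination 4 * h1
      refine hg.contDiffWithinAt.congr_of_eventuallyEq ?_ (heq x hx ha)
      filter_upwards [self_mem_nhdsWithin, hnear.filter_mono nhdsWithin_le_nhds] with y hy hya
      exact heq y hy hya
    · have hg : ContDiffAt ℝ (⊤ : ℕ∞)
          (fun y : ℝ × ℝ => (-y.1 + Real.sqrt (y.1 ^ 2 + y.2 * q y.2)) / (2 * y.2)) x :=
        (contDiffAt_fst.neg.add hsqrt).div (contDiffAt_const.mul contDiffAt_snd) (by positivity)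
      have hnear : ∀ᶠ y : ℝ × ℝ in nhds x, 0 < y.2 :=
        continuous_snd.continuousAt.eventually (lt_mem_nhds hb)
      refine (hg.congr_of_eventuallyEq ?_).contDiffWithinAt
      filter_upwards [hnear] with y hy
      rw [hlamdef, if_neg hy.ne']
  refine ⟨hsmooth.continuousOn, hsmooth, hF, ?_, ?_, ?_⟩
  · intro x hx
    have hd : HasDerivAt (fun p => F₁ x.1 x.2 p) (x.1 + 2 * x.2 * lam₁ x) (lam₁ x) := by
      simp only [hFdef]
      have h := ((((hasDerivAt_id (lam₁ x)).pow 2).const_mul x.2).add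
        ((hasDerivAt_id (lam₁ x)).const_mul x.1)).sub_const (q x.2 / 4)
      refine HasDerivAt.congr_deriv h ?_
      simp only [id, Nat.cast_ofNat]
      ring
    rw [hd.deriv, hroot x hx]
    exact (Real.sqrt_pos.mpr (hD x hx)).ne'
  · intro x hx
    have h1 := hroot x hx
    have hbq : 0 ≤ x.2 * q x.2 := by
      rcases hx.1.eq_or_lt with h | h
      · simp [← h]
      · exact (mul_pos h (hqpos _ h.ne')).le
    have h2 : |x.1| ≤ Real.sqrt (x.1 ^ 2 + x.2 * q x.2) :=
      Real.abs_le_sqrt (by linarith)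
    linarith [neg_abs_le x.1]
  · intro a b hb
    rw [hlamdef]
    simp only [if_neg hb.ne']
    rw [mul_comm b (q b)]
    field_simp
end

section
/- Let σ > 0 and define λ₂(a,b) := 0 if b = 0, and λ₂(a,b) := σ·log(1 + exp(−a/(b·σ))) if b > 0. Then λ₂ is continuous on S, smooth (C^∞) on S, and satisfies a + b·λ₂(a,b) ≥ 0 for all (a,b) ∈ S. -/
/-!
Near a point with `b > 0` the formula is a composition of smooth functions. Near a point with
`a > 0`, both branches are given on `b ≥ 0` by the single expression
`σ * log (1 + expNegInvGlue (b * σ / a))`, where `expNegInvGlue t` is `exp (-1/t)` for `t > 0` and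
`0` for `t ≤ 0`; it is `C^∞` by `expNegInvGlue.contDiff`. These two cases cover the set, and
continuity follows from smoothness. The inequality is `log (1 + exp t) ≥ t` at `t = -a / (b * σ)`,
multiplied by `b * σ`.
-/

/-- The Softplus universal formula for safety.
For `σ > 0`, the function `λ₂(a,b) = 0` if `b = 0`, `σ·log(1 + exp(−a/(b·σ)))` if `b > 0`, is
continuous and smooth on `S = {(a,b) : b ≥ 0 ∧ (a > 0 ∨ b > 0)}` and satisfies
`a + b·λ₂(a,b) ≥ 0` on `S`. -/
theorem softplus_formula
    (σ : ℝ) (hσ : 0 < σ)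
    (S : Set (ℝ × ℝ))
    (hSdef : S = {x : ℝ × ℝ | 0 ≤ x.2 ∧ (0 < x.1 ∨ 0 < x.2)})
    (lam₂ : ℝ × ℝ → ℝ)
    (hlamdef : ∀ x : ℝ × ℝ,
      lam₂ x = if x.2 = 0 then 0
        else σ * Real.log (1 + Real.exp (-x.1 / (x.2 * σ)))) :
    ContinuousOn lam₂ S ∧ ContDiffOn ℝ (⊤ : ℕ∞) lam₂ S ∧
      ∀ x ∈ S, x.1 + x.2 * lam₂ x ≥ 0 := by
  have hsmooth : ContDiffOn ℝ (⊤ : ℕ∞) lam₂ S := by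
    intro x hx
    have hx' := hx
    rw [hSdef] at hx'
    rcases hx'.2 with ha | hb
    · have hpos : 1 + expNegInvGlue (x.2 * σ / x.1) ≠ 0 := by
        have := expNegInvGlue.nonneg (x.2 * σ / x.1)
        positivity
      have hglue : ContDiffAt ℝ (⊤ : ℕ∞)
          (fun y : ℝ × ℝ => σ * Real.log (1 + expNegInvGlue (y.2 * σ / y.1))) x := by
        have hdiv : ContDiffAt ℝ (⊤ : ℕ∞) (fun y : ℝ × ℝ => y.2 * σ / y.1) x :=
          (contDiffAt_snd.mul contDiffAt_const).div contDiffAt_fst ha.ne'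
        exact contDiffAt_const.mul
          ((contDiffAt_const.add (expNegInvGlue.contDiff.contDiffAt.comp x hdiv)).log hpos)
      refine hglue.contDiffWithinAt.congr_of_eventuallyEq_of_mem ?_ hx
      have hnear : ∀ᶠ y : ℝ × ℝ in nhds x, 0 < y.1 :=
        continuous_fst.continuousAt.eventually (lt_mem_nhds ha)
      filter_upwards [self_mem_nhdsWithin, hnear.filter_mono nhdsWithin_le_nhds] with y hy hy1
      rw [hSdef] at hy
      rw [hlamdef]
      rcases hy.1.eq_or_lt with h0 | h0
      · simp [← h0]
      · have ht : 0 < y.2 * σ / y.1 := by positivity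
        rw [if_neg h0.ne', expNegInvGlue, if_neg ht.not_ge, inv_div, neg_div]
    · have hformula : ContDiffAt ℝ (⊤ : ℕ∞)
          (fun y : ℝ × ℝ => σ * Real.log (1 + Real.exp (-y.1 / (y.2 * σ)))) x := by
        have hdiv : ContDiffAt ℝ (⊤ : ℕ∞) (fun y : ℝ × ℝ => -y.1 / (y.2 * σ)) x :=
          contDiffAt_fst.neg.div (contDiffAt_snd.mul contDiffAt_const) (mul_pos hb hσ).ne'
        exact contDiffAt_const.mul ((contDiffAt_const.add hdiv.exp).log (by positivity))
      refine (hformula.congr_of_eventuallyEq ?_).contDiffWithinAt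
      have hnear : ∀ᶠ y : ℝ × ℝ in nhds x, 0 < y.2 :=
        continuous_snd.continuousAt.eventually (lt_mem_nhds hb)
      filter_upwards [hnear] with y hy
      rw [hlamdef, if_neg hy.ne']
  refine ⟨hsmooth.continuousOn, hsmooth, fun x hx => ?_⟩
  rw [hSdef] at hx
  rw [hlamdef]
  rcases hx.1.eq_or_lt with h0 | h0
  · have ha : 0 < x.1 := hx.2.resolve_right h0.not_lt
    simpa [← h0] using ha.le
  · rw [if_neg h0.ne']
    have hlog : -x.1 / (x.2 * σ) ≤ Real.log (1 + Real.exp (-x.1 / (x.2 * σ))) := by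
      rw [Real.le_log_iff_exp_le (by positivity)]
      linarith
    rw [div_le_iff₀ (mul_pos h0 hσ)] at hlog
    linarith
end
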